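/- Let 0 < r ≤ 1 ≤ R, ε > 0, and let λ be one of the four phases λ_{ε₁,ε₂}. Then there exists a constant C > 0, depending only on γ̄ and ψ, such that for every t > 0 and every f ∈ L¹(ℝ³), ‖Ψ_{r,R}(D) G_λ(t) f‖_{L^∞(ℝ³)} ≤ C R³ r^{−2} (ε/t)^{1/2} ‖f‖_{L¹(ℝ³)}. -/

import Mathlib

/- Common setup: the space ℝ³ (as a Euclidean space), Fourier transform,
   partial derivatives, Sobolev-type norms. -/

noncomputable section

open MeasureTheory Real Complex Filter ENNReal

/-- The space `ℝ³`. -/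
abbrev E3 : Type := EuclideanSpace ℝ (Fin 3)

/-- Fourier transform on `ℝ³`. -/
def FT (f : E3 → ℂ) : E3 → ℂ := FourierTransform.fourier f

/-- Inverse Fourier transform on `ℝ³`. -/
def FTinv (f : E3 → ℂ) : E3 → ℂ := FourierTransformInv.fourierInv f

/-- The point `(x₁, x₂, x₃) ∈ ℝ³`. -/
def pt (x1 x2 x3 : ℝ) : E3 := (EuclideanSpace.equiv (Fin 3) ℝ).symm ![x1, x2, x3]

/-- Fourier transform of a real-valued function. -/
def FTr (f : E3 → ℝ) : E3 → ℂ := FT (fun x => (f x : ℂ))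

/-- Partial derivative `∂ᵢ` of a real-valued function. -/
def pd (i : Fin 3) (f : E3 → ℝ) (x : E3) : ℝ := fderiv ℝ f x (EuclideanSpace.single i 1)

/-- Partial derivative `∂ᵢ` of a complex-valued function. -/
def pdC (i : Fin 3) (f : E3 → ℂ) (x : E3) : ℂ := fderiv ℝ f x (EuclideanSpace.single i 1)

/-- A smooth cut-off function `ψ` with values in `[0,1]`, equal to `1` on `(-∞,1]`
and to `0` on `[2,∞)`. -/
def IsCutoff (ψ : ℝ → ℝ) : Prop :=
  ContDiff ℝ (⊤ : ℕ∞) ψ ∧ (∀ x, ψ x ∈ Set.Icc (0:ℝ) 1) ∧ (∀ x ≤ (1:ℝ), ψ x = 1) ∧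
    (∀ x, (2:ℝ) ≤ x → ψ x = 0)

/-- The norm `|ξ_h|` of the horizontal component of a frequency `ξ`. -/
def xih (ξ : E3) : ℝ := Real.sqrt (ξ 0 ^ 2 + ξ 1 ^ 2)

/-- The frequency cut-off function `Ψ_{r,R}`. -/
def Psi (ψ : ℝ → ℝ) (r R : ℝ) (ξ : E3) : ℝ :=
  ψ (‖ξ‖ / R) * ((1 - ψ (xih ξ / r)) * (1 - ψ (|ξ 2| / r)))

/-- The set `C_{r,R} = {ξ : |ξ| ≤ R, |ξ_h| ≥ r, |ξ₃| ≥ r}`. -/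
def CrR (r R : ℝ) : Set E3 := {ξ | ‖ξ‖ ≤ R ∧ r ≤ xih ξ ∧ r ≤ |ξ 2|}

/-- The frequency cut-off operator `Ψ_{r,R}(D) g = 𝓕⁻¹(Ψ_{r,R} ĝ)`. -/
def PsiD (ψ : ℝ → ℝ) (r R : ℝ) (g : E3 → ℂ) : E3 → ℂ :=
  FTinv (fun ξ => (Psi ψ r R ξ : ℂ) * FT g ξ)

/-- The eigenvalues `λ_{ε₁,ε₂}(ξ)` of `B̂(ξ)`. -/
def lamEV (γ ε1 ε2 : ℝ) (ξ : E3) : ℂ :=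
  (ε1 : ℂ) * (Complex.I / 2) *
    (((Real.sqrt (1 + γ ^ 2 * ‖ξ‖ ^ 2 + 2 * γ * ξ 2) +
      ε2 * Real.sqrt (1 + γ ^ 2 * ‖ξ‖ ^ 2 - 2 * γ * ξ 2)) : ℝ) : ℂ)

/-- The cut-off scalar propagator `Ψ_{r,R}(D) G_λ(t) f = 𝓕⁻¹(Ψ_{r,R}(ξ) e^{(t/ε)λ(ξ)} f̂(ξ))`. -/
def PsiG (ψ : ℝ → ℝ) (r R γ ε1 ε2 ε t : ℝ) (f : E3 → ℂ) : E3 → ℂ :=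
  FTinv (fun ξ => ((Psi ψ r R ξ : ℝ) : ℂ) *
    Complex.exp (((t / ε : ℝ) : ℂ) * lamEV γ ε1 ε2 ξ) * FT f ξ)


lemma vdc_pos (α β δ S T : ℝ) (A A' h h1 h2 : ℝ → ℝ) (hab : α ≤ β) (hδ : 0 < δ)
    (hA : ∀ u ∈ Set.Icc α β, HasDerivAt A (A' u) u)
    (hh : ∀ u ∈ Set.Icc α β, HasDerivAt h (h1 u) u)
    (hh1 : ∀ u ∈ Set.Icc α β, HasDerivAt h1 (h2 u) u)
    (hA'c : ContinuousOn A' (Set.Icc α β)) (hh2c : ContinuousOn h2 (Set.Icc α β))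
    (hlow : ∀ u ∈ Set.Icc α β, δ ≤ h2 u)
    (hS : ∀ u ∈ Set.Icc α β, |A u| ≤ S)
    (hT : ∫ u in α..β, |A' u| ≤ T) :
    ‖∫ u in α..β, (A u : ℂ) * Complex.exp (Complex.I * (h u : ℂ))‖ ≤ (8 * S + T) / √δ := by
  have hS0 : 0 ≤ S := le_trans (abs_nonneg _) (hS α ⟨le_refl _, hab⟩)
  have huI : Set.uIcc α β = Set.Icc α β := Set.uIcc_of_le hab
  have hAc : ContinuousOn A (Set.Icc α β) := fun u hu => (hA u hu).continuousAt.continuousWithinAt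
  have hhc : ContinuousOn h (Set.Icc α β) := fun u hu => (hh u hu).continuousAt.continuousWithinAt
  have hh1c : ContinuousOn h1 (Set.Icc α β) :=
    fun u hu => (hh1 u hu).continuousAt.continuousWithinAt
  set s := √δ with hs
  have hs0 : 0 < s := Real.sqrt_pos.2 hδ
  have hss : s ^ 2 = δ := Real.sq_sqrt hδ.le
  have hden : ∀ u, 0 < δ + h1 u ^ 2 := fun u => by positivity
  have hden' : ∀ u, δ + h1 u ^ 2 ≠ 0 := fun u => (hden u).ne'
  let w : ℝ → ℝ := fun u => h1 u / (δ + h1 u ^ 2)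
  let w' : ℝ → ℝ := fun u => h2 u * (δ - h1 u ^ 2) / (δ + h1 u ^ 2) ^ 2
  let e : ℝ → ℂ := fun u => Complex.exp (Complex.I * (h u : ℂ))
  let B : ℝ → ℝ := fun u => A' u * w u + A u * w' u
  let C : ℝ → ℝ := fun u => A u * w u * h1 u
  let Θ : ℝ → ℂ := fun u => ((A u * w u : ℝ) : ℂ) * e u
  let Θ' : ℝ → ℂ := fun u => ((B u : ℝ) : ℂ) * e u + Complex.I * (C u : ℂ) * e u
  have hw : ∀ u ∈ Set.Icc α β, HasDerivAt w (w' u) u := by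
    intro u hu
    have := (hh1 u hu).div (((hh1 u hu).pow 2).const_add δ) (hden' u)
    convert! this using 1
    simp only [w']
    congr 1
    simp; ring
  have hΘ : ∀ u ∈ Set.Icc α β, HasDerivAt Θ (Θ' u) u := by
    intro u hu
    have h1' := ((hA u hu).mul (hw u hu)).ofReal_comp
    have h2' : HasDerivAt e (e u * (Complex.I * (h1 u : ℂ))) u :=
      ((hh u hu).ofReal_comp.const_mul Complex.I).cexp
    convert! h1'.mul h2' using 1
    simp only [Θ', B, C, Pi.mul_apply]
    push_cast
    ring
  have hwc : ContinuousOn w (Set.Icc α β) := by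
    apply ContinuousOn.div hh1c (by fun_prop) (fun u _ => hden' u)
  have hw'c : ContinuousOn w' (Set.Icc α β) := by
    apply ContinuousOn.div (by fun_prop) (by fun_prop) (fun u _ => pow_ne_zero 2 (hden' u))
  have hec : ContinuousOn e (Set.Icc α β) := by
    simp only [e]
    fun_prop
  have hΘ'c : ContinuousOn Θ' (Set.Icc α β) := by
    simp only [Θ', B, C]
    fun_prop
  have hΘi : IntervalIntegrable Θ' volume α β := by
    apply ContinuousOn.intervalIntegrable; rwa [huI]
  have hFTC : ∫ u in α..β, Θ' u = Θ β - Θ α :=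
    intervalIntegral.integral_eq_sub_of_hasDerivAt (by rw [huI]; exact hΘ) hΘi
  have hAe : IntervalIntegrable (fun u => (A u : ℂ) * e u) volume α β := by
    apply ContinuousOn.intervalIntegrable; rw [huI]; fun_prop
  let g : ℝ → ℝ := fun u => |A' u| * (1 / (2 * s)) + 2 * S * (h2 u / (δ + h1 u ^ 2))
  have hq : ContinuousOn (fun u => h2 u / (δ + h1 u ^ 2)) (Set.Icc α β) :=
    ContinuousOn.div hh2c (by fun_prop) (fun u _ => hden' u)
  have hqi : IntervalIntegrable (fun u => h2 u / (δ + h1 u ^ 2)) volume α β := by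
    apply ContinuousOn.intervalIntegrable; rwa [huI]
  have hA'i : IntervalIntegrable (fun u => |A' u|) volume α β := by
    apply ContinuousOn.intervalIntegrable; rw [huI]; exact hA'c.abs
  have hgi : IntervalIntegrable g volume α β :=
    (hA'i.mul_const _).add (hqi.const_mul _)
  have habsw : ∀ u, |w u| ≤ 1 / (2 * s) := by
    intro u
    simp only [w]
    rw [abs_div, abs_of_pos (hden u), div_le_div_iff₀ (hden u) (by positivity)]
    nlinarith [sq_nonneg (|h1 u| - s), sq_abs (h1 u)]
  have hpt : ∀ u ∈ Set.Icc α β, ‖(A u : ℂ) * e u + Complex.I * Θ' u‖ ≤ g u := by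
    intro u hu
    have hen : ‖e u‖ = 1 := by
      simp only [e]; rw [mul_comm]; exact Complex.norm_exp_ofReal_mul_I _
    have heq : (A u : ℂ) * e u + Complex.I * Θ' u
        = (((A u - C u : ℝ) : ℂ) + Complex.I * (B u : ℂ)) * e u := by
      simp only [Θ']
      push_cast
      linear_combination ( (C u : ℂ) * e u) * Complex.I_mul_I
    rw [heq, norm_mul, hen, mul_one]
    have hd := hlow u hu
    have hpos : 0 ≤ h2 u := hδ.le.trans hd
    have h3 : |A u - C u| ≤ S * (h2 u / (δ + h1 u ^ 2)) := by
      have : A u - C u = A u * (δ / (δ + h1 u ^ 2)) := by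
        simp only [C, w]
        have := hden' u
        field_simp
        ring
      rw [this, abs_mul, abs_of_nonneg (div_nonneg hδ.le (hden u).le)]
      have := hden u
      gcongr
      exact hS u hu
    have h4 : |w' u| ≤ h2 u / (δ + h1 u ^ 2) := by
      simp only [w']
      rw [abs_div, abs_mul, abs_of_nonneg hpos, abs_of_pos (pow_pos (hden u) 2), div_le_div_iff₀
        (pow_pos (hden u) 2) (hden u)]
      have h5 : |δ - h1 u ^ 2| ≤ δ + h1 u ^ 2 := by
        rw [abs_le]; constructor <;> nlinarith [sq_nonneg (h1 u)]
      have h6 := mul_le_mul_of_nonneg_left h5 hpos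
      have h7 := mul_le_mul_of_nonneg_right h6 (hden u).le
      nlinarith
    have h5 : |B u| ≤ |A' u| * (1 / (2 * s)) + S * (h2 u / (δ + h1 u ^ 2)) := by
      simp only [B]
      refine (abs_add_le _ _).trans ?_
      rw [abs_mul, abs_mul]
      gcongr
      · exact habsw u
      · exact hS u hu
    calc _ ≤ ‖((A u - C u : ℝ) : ℂ)‖ + ‖Complex.I * (B u : ℂ)‖ := norm_add_le _ _
      _ = |A u - C u| + |B u| := by
        rw [norm_mul, Complex.norm_I, one_mul, Complex.norm_real, Complex.norm_real]; rfl
      _ ≤ _ := by simp only [g]; linarith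
  have harc : ∫ u in α..β, h2 u / (δ + h1 u ^ 2) ≤ π / s := by
    have hd : ∀ u ∈ Set.uIcc α β, HasDerivAt (fun u => Real.arctan (h1 u / s) / s)
        (h2 u / (δ + h1 u ^ 2)) u := by
      intro u hu
      rw [huI] at hu
      have := ((hh1 u hu).div_const s).arctan.div_const s
      convert! this using 1
      rw [← hss]
      have := hden' u
      rw [← hss] at this
      field_simp
    rw [intervalIntegral.integral_eq_sub_of_hasDerivAt hd hqi, ← sub_div]
    gcongr
    have := Real.arctan_lt_pi_div_two (h1 β / s)
    have := Real.neg_pi_div_two_lt_arctan (h1 α / s)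
    linarith
  have hgint : ∫ u in α..β, g u ≤ (T / 2 + 2 * S * π) / s := by
    simp only [g]
    rw [intervalIntegral.integral_add (hA'i.mul_const _) (hqi.const_mul _),
      intervalIntegral.integral_mul_const, intervalIntegral.integral_const_mul]
    calc _ ≤ T * (1 / (2 * s)) + 2 * S * (π / s) := by gcongr
      _ = _ := by field_simp
  have hΘb : ∀ u ∈ Set.Icc α β, ‖Θ u‖ ≤ S * (1 / (2 * s)) := by
    intro u hu
    have hen : ‖e u‖ = 1 := by
      simp only [e]; rw [mul_comm]; exact Complex.norm_exp_ofReal_mul_I _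
    simp only [Θ]
    rw [norm_mul, hen, mul_one, Complex.norm_real, Real.norm_eq_abs, abs_mul]
    gcongr
    · exact hS u hu
    · exact habsw u
  have hsplit : ∫ u in α..β, (A u : ℂ) * e u
      = (∫ u in α..β, ((A u : ℂ) * e u + Complex.I * Θ' u)) - Complex.I * (Θ β - Θ α) := by
    rw [intervalIntegral.integral_add hAe (hΘi.const_mul _), intervalIntegral.integral_const_mul,
      hFTC]
    ring
  change ‖∫ u in α..β, (A u : ℂ) * e u‖ ≤ _
  rw [hsplit]
  have hT0 : 0 ≤ T := le_trans (intervalIntegral.integral_nonneg hab fun _ _ => abs_nonneg _) hT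
  calc _ ≤ ‖∫ u in α..β, ((A u : ℂ) * e u + Complex.I * Θ' u)‖ + ‖Complex.I * (Θ β - Θ α)‖ :=
        norm_sub_le _ _
    _ ≤ (∫ u in α..β, g u) + (‖Θ β‖ + ‖Θ α‖) := by
        gcongr
        · apply intervalIntegral.norm_integral_le_of_norm_le hab _ hgi
          exact Filter.Eventually.of_forall fun u hu => hpt u ⟨hu.1.le, hu.2⟩
        · rw [norm_mul, Complex.norm_I, one_mul]; exact norm_sub_le _ _
    _ ≤ (T / 2 + 2 * S * π) / s + (S * (1 / (2 * s)) + S * (1 / (2 * s))) := by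
        gcongr
        · exact hΘb β ⟨hab, le_refl _⟩
        · exact hΘb α ⟨le_refl _, hab⟩
    _ = (T / 2 + 2 * S * π + S) / s := by field_simp; ring
    _ ≤ _ := by
        apply div_le_div_of_nonneg_right _ hs0.le
        nlinarith [Real.pi_lt_d2, mul_le_mul_of_nonneg_left Real.pi_lt_d2.le hS0]

lemma vdc (σ : ℝ) (hσ : σ = 1 ∨ σ = -1)
    (α β δ S T : ℝ) (A A' h h1 h2 : ℝ → ℝ) (hab : α ≤ β) (hδ : 0 < δ)
    (hA : ∀ u ∈ Set.Icc α β, HasDerivAt A (A' u) u)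
    (hh : ∀ u ∈ Set.Icc α β, HasDerivAt h (h1 u) u)
    (hh1 : ∀ u ∈ Set.Icc α β, HasDerivAt h1 (h2 u) u)
    (hA'c : ContinuousOn A' (Set.Icc α β)) (hh2c : ContinuousOn h2 (Set.Icc α β))
    (hlow : ∀ u ∈ Set.Icc α β, δ ≤ h2 u)
    (hS : ∀ u ∈ Set.Icc α β, |A u| ≤ S)
    (hT : ∫ u in α..β, |A' u| ≤ T) :
    ‖∫ u in α..β, (A u : ℂ) * Complex.exp (Complex.I * ((σ * h u : ℝ) : ℂ))‖
      ≤ (8 * S + T) / √δ := by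
  have key := vdc_pos α β δ S T A A' h h1 h2 hab hδ hA hh hh1 hA'c hh2c hlow hS hT
  rcases hσ with rfl | rfl
  · simpa using key
  · rw [← Complex.norm_conj] at key
    rw [intervalIntegral.integral_of_le hab, ← integral_conj] at key
    rw [intervalIntegral.integral_of_le hab]
    refine le_trans (le_of_eq ?_) key
    congr 1
    apply integral_congr_ae
    filter_upwards with u
    simp [← Complex.exp_conj]


lemma nrm_deriv (x0 x1 y0 y1 u : ℝ) (hpos : 0 < x0 + x1 * u) :
    HasDerivAt (fun u => √((x0 + x1 * u) ^ 2 + (y0 + y1 * u) ^ 2))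
      ((x1 * (x0 + x1 * u) + y1 * (y0 + y1 * u)) / √((x0 + x1 * u) ^ 2 + (y0 + y1 * u) ^ 2)) u := by
  have hx : HasDerivAt (fun u : ℝ => x0 + x1 * u) x1 u := by
    simpa using ((hasDerivAt_id u).const_mul x1).const_add x0
  have hy : HasDerivAt (fun u : ℝ => y0 + y1 * u) y1 u := by
    simpa using ((hasDerivAt_id u).const_mul y1).const_add y0
  have hne : (x0 + x1 * u) ^ 2 + (y0 + y1 * u) ^ 2 ≠ 0 := by positivity
  have := ((hx.pow 2).add (hy.pow 2)).sqrt hne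
  convert! this using 1
  simp only [Pi.add_apply, Pi.pow_apply]
  have : √((x0 + x1 * u) ^ 2 + (y0 + y1 * u) ^ 2) ≠ 0 := by positivity
  field_simp
  simp; ring

lemma nrm_deriv2 (x0 x1 y0 y1 u : ℝ) (hpos : 0 < x0 + x1 * u) :
    HasDerivAt (fun u => (x1 * (x0 + x1 * u) + y1 * (y0 + y1 * u)) /
        √((x0 + x1 * u) ^ 2 + (y0 + y1 * u) ^ 2))
      ((x1 * (y0 + y1 * u) - y1 * (x0 + x1 * u)) ^ 2 /
        √((x0 + x1 * u) ^ 2 + (y0 + y1 * u) ^ 2) ^ 3) u := by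
  have hN := nrm_deriv x0 x1 y0 y1 u hpos
  have hx : HasDerivAt (fun u : ℝ => x0 + x1 * u) x1 u := by
    simpa using ((hasDerivAt_id u).const_mul x1).const_add x0
  have hy : HasDerivAt (fun u : ℝ => y0 + y1 * u) y1 u := by
    simpa using ((hasDerivAt_id u).const_mul y1).const_add y0
  have hne : √((x0 + x1 * u) ^ 2 + (y0 + y1 * u) ^ 2) ≠ 0 := by positivity
  have hsq : √((x0 + x1 * u) ^ 2 + (y0 + y1 * u) ^ 2) ^ 2
      = (x0 + x1 * u) ^ 2 + (y0 + y1 * u) ^ 2 := Real.sq_sqrt (by positivity)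
  have := ((hx.const_mul x1).add (hy.const_mul y1)).div hN hne
  convert! this using 1
  simp only [Pi.add_apply]
  field_simp
  rw [hsq]
  ring

def amp (ψ : ℝ → ℝ) (r R ρ z : ℝ) : ℝ :=
  ψ (√(ρ ^ 2 + z ^ 2) / R) * ((1 - ψ (ρ / r)) * (1 - ψ (z / r))) * ρ

def phs (γ ε2 ρ z : ℝ) : ℝ :=
  (ε2 * √((γ * ρ) ^ 2 + (γ * z + 1) ^ 2) + √((γ * ρ) ^ 2 + (γ * z - 1) ^ 2)) / 2

def aa (γ ρ z : ℝ) : ℝ := √((γ * ρ) ^ 2 + (γ * z + 1) ^ 2)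
def bb (γ ρ z : ℝ) : ℝ := √((γ * ρ) ^ 2 + (γ * z - 1) ^ 2)

structure Cut (ψ ψ' : ℝ → ℝ) (M : ℝ) : Prop where
  one_le : 1 ≤ M
  der : ∀ x, HasDerivAt ψ (ψ' x) x
  cont : Continuous ψ'
  nonneg : ∀ x, 0 ≤ ψ x
  le_one : ∀ x, ψ x ≤ 1
  bd : ∀ x, |ψ' x| ≤ M
  int : ∀ a b, a ≤ b → ∫ x in a..b, |ψ' x| ≤ M
  one : ∀ x ≤ 1, ψ x = 1
  zero : ∀ x, 2 ≤ x → ψ x = 0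

lemma tv_aux {ψ ψ' : ℝ → ℝ} {M : ℝ} (hc : Cut ψ ψ' M) (r c lo hi : ℝ) (hr : 0 < r)
    (h : lo ≤ hi) : ∫ u in lo..hi, |ψ' ((c + u) / r)| / r ≤ M := by
  rw [intervalIntegral.integral_div]
  have : ∀ u, (c + u) / r = c / r + u / r := fun u => by ring
  simp_rw [this]
  rw [intervalIntegral.integral_comp_add_div (fun x => |ψ' x|) hr.ne', smul_eq_mul,
    mul_div_cancel_left₀ _ hr.ne']
  apply hc.int
  gcongr

lemma line_bound {ψ ψ' : ℝ → ℝ} {M : ℝ} (hc : Cut ψ ψ' M) (γ r R τ ε2 σ p q α c lo hi P δ : ℝ)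
    (hγ : 0 < γ) (hr : 0 < r) (hR : 1 ≤ R) (hτ : 0 < τ) (hε : ε2 = 1 ∨ ε2 = -1)
    (hσ : σ = 1 ∨ σ = -1) (hα : α = 0 ∨ α = 1) (hlo : r ≤ lo) (hlh : lo ≤ hi) (hhi : hi ≤ 2 * R)
    (hcr : r ≤ c) (hP : ∀ u ∈ Set.Icc lo hi, c + α * u ≤ P) (hP2 : α * (2 * R) ≤ P) (hδ : 0 < δ)
    (hlow : ∀ u ∈ Set.Icc lo hi, δ ≤ τ / 2 *
      (γ ^ 2 * (α * (γ * u - 1) - γ * (c + α * u)) ^ 2 / bb γ (c + α * u) u ^ 3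
       - γ ^ 2 * (α * (γ * u + 1) - γ * (c + α * u)) ^ 2 / aa γ (c + α * u) u ^ 3)) :
    ‖∫ u in lo..hi, (amp ψ r R (c + α * u) u : ℂ) * Complex.exp (Complex.I *
      ((σ * (τ * phs γ ε2 (c + α * u) u) + p * (c + α * u) + q * u : ℝ) : ℂ))‖
      ≤ (6 * M + 9) * P / √δ := by
  have hα0 : 0 ≤ α := by rcases hα with rfl | rfl <;> norm_num
  have hα1 : α ≤ 1 := by rcases hα with rfl | rfl <;> norm_num
  have hR0 : 0 < R := by linarith
  have hM0 : 0 ≤ M := by linarith [hc.one_le]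
  have hψc : Continuous ψ := continuous_iff_continuousAt.2 fun x => (hc.der x).continuousAt
  have hψ'c : Continuous ψ' := hc.cont
  have hu0 : ∀ u ∈ Set.Icc lo hi, 0 < u := fun u hu => by linarith [hu.1]
  have hρ0 : ∀ u ∈ Set.Icc lo hi, 0 < c + α * u := fun u hu => by
    have := mul_nonneg hα0 (hu0 u hu).le
    linarith
  have hP0 : 0 ≤ P := le_trans (hρ0 lo ⟨le_refl _, hlh⟩).le (hP lo ⟨le_refl _, hlh⟩)
  let N : ℝ → ℝ := fun u => √((c + α * u) ^ 2 + (0 + 1 * u) ^ 2)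
  let n' : ℝ → ℝ := fun u => (α * (c + α * u) + 1 * (0 + 1 * u)) / N u
  let A : ℝ → ℝ := fun u => amp ψ r R (c + α * u) u
  let A' : ℝ → ℝ := fun u =>
    (ψ' (N u / R) * (n' u / R)) * (((1 - ψ ((c + α * u) / r)) * (1 - ψ (u / r))) * (c + α * u))
    + ψ (N u / R) * ((-(ψ' ((c + α * u) / r) * (α / r)) * (1 - ψ (u / r))
        + (1 - ψ ((c + α * u) / r)) * (-(ψ' (u / r) * (1 / r)))) * (c + α * u)
        + ((1 - ψ ((c + α * u) / r)) * (1 - ψ (u / r))) * α)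
  have hNd : ∀ u ∈ Set.Icc lo hi, HasDerivAt N (n' u) u := fun u hu =>
    nrm_deriv c α 0 1 u (hρ0 u hu)
  have hNpos : ∀ u ∈ Set.Icc lo hi, 0 < N u := fun u hu => by
    have := hρ0 u hu
    simp only [N]; positivity
  have hxd : ∀ u, HasDerivAt (fun u : ℝ => c + α * u) α u := fun u => by
    simpa using ((hasDerivAt_id u).const_mul α).const_add c
  have hA : ∀ u ∈ Set.Icc lo hi, HasDerivAt A (A' u) u := by
    intro u hu
    have h1 : HasDerivAt (fun u => ψ (N u / R)) (ψ' (N u / R) * (n' u / R)) u :=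
      (hc.der _).comp u ((hNd u hu).div_const R)
    have h2 : HasDerivAt (fun u => 1 - ψ ((c + α * u) / r)) (-(ψ' ((c + α * u) / r) * (α / r))) u :=
      ((hc.der _).comp u ((hxd u).div_const r)).const_sub 1
    have h3 : HasDerivAt (fun u => 1 - ψ (u / r)) (-(ψ' (u / r) * (1 / r))) u :=
      ((hc.der _).comp u ((hasDerivAt_id u).div_const r)).const_sub 1
    have h4 := h1.mul ((h2.mul h3).mul (hxd u))
    convert! h4 using 1
    ext v
    simp only [A, amp, N, Pi.mul_apply, zero_add, one_mul]
    ring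
  have hNc : Continuous N := by simp only [N]; fun_prop
  have hn'c : ContinuousOn n' (Set.Icc lo hi) := by
    apply ContinuousOn.div (by fun_prop) (by fun_prop) (fun u hu => (hNpos u hu).ne')
  have hA'c : ContinuousOn A' (Set.Icc lo hi) := by
    simp only [A']
    fun_prop
  have hs01 : ∀ x, |1 - ψ x| ≤ 1 := fun x => by
    rw [abs_le]; constructor <;> linarith [hc.nonneg x, hc.le_one x]
  have hψ1 : ∀ x, |ψ x| ≤ 1 := fun x => by
    rw [abs_le]; constructor <;> linarith [hc.nonneg x, hc.le_one x]
  have hS : ∀ u ∈ Set.Icc lo hi, |A u| ≤ P := by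
    intro u hu
    simp only [A, amp]
    rw [abs_mul, abs_mul, abs_mul, abs_of_pos (hρ0 u hu)]
    calc _ ≤ 1 * (1 * 1) * P := by
          gcongr
          · have := hρ0 u hu; linarith
          · exact hψ1 _
          · exact hs01 _
          · exact hs01 _
          · exact hP u hu
      _ = P := by ring
  have hn2 : ∀ u ∈ Set.Icc lo hi, |n' u| ≤ 2 := by
    intro u hu
    simp only [n']
    have h1 := hρ0 u hu
    have h2 := hu0 u hu
    have h3 : c + α * u ≤ N u := Real.le_sqrt_of_sq_le (by nlinarith)
    have h4 : u ≤ N u := Real.le_sqrt_of_sq_le (by nlinarith)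
    rw [abs_of_nonneg (div_nonneg (by nlinarith) (hNpos u hu).le), div_le_iff₀ (hNpos u hu)]
    nlinarith
  let g : ℝ → ℝ := fun u => P * (2 * M / R) +
    (P * (α * (|ψ' ((c + α * u) / r)| / r) + |ψ' ((0 + u) / r)| / r) + α)
  have hA'g : ∀ u ∈ Set.Icc lo hi, |A' u| ≤ g u := by
    intro u hu
    have h1 := hρ0 u hu
    have h2 := hP u hu
    have e1 : |(ψ' (N u / R) * (n' u / R)) *
        (((1 - ψ ((c + α * u) / r)) * (1 - ψ (u / r))) * (c + α * u))| ≤ P * (2 * M / R) := by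
      rw [abs_mul, abs_mul, abs_mul, abs_mul, abs_div, abs_of_pos hR0, abs_of_pos h1]
      calc _ ≤ (M * (2 / R)) * ((1 * 1) * P) := by
            gcongr
            · exact hc.bd _
            · exact hn2 u hu
            · exact hs01 _
            · exact hs01 _
        _ = _ := by ring
    have e2 : |(-(ψ' ((c + α * u) / r) * (α / r)) * (1 - ψ (u / r))
        + (1 - ψ ((c + α * u) / r)) * (-(ψ' (u / r) * (1 / r)))) * (c + α * u)|
        ≤ (α * (|ψ' ((c + α * u) / r)| / r) + |ψ' (u / r)| / r) * P := by
      rw [abs_mul, abs_of_pos h1]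
      refine mul_le_mul ?_ h2 h1.le (by positivity)
      refine (abs_add_le _ _).trans (add_le_add ?_ ?_)
      · rw [abs_mul, abs_neg, abs_mul, abs_of_nonneg (div_nonneg hα0 hr.le)]
        calc _ ≤ |ψ' ((c + α * u) / r)| * (α / r) * 1 := by
              gcongr; exact hs01 _
          _ = _ := by ring
      · rw [abs_mul, abs_neg, abs_mul, abs_of_pos (div_pos one_pos hr)]
        calc _ ≤ 1 * (|ψ' (u / r)| * (1 / r)) := by
              gcongr; exact hs01 _
          _ = _ := by ring
    have e3 : |((1 - ψ ((c + α * u) / r)) * (1 - ψ (u / r))) * α| ≤ α := by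
      rw [abs_mul, abs_mul, abs_of_nonneg hα0]
      calc _ ≤ (1 * 1) * α := by
            gcongr
            · exact hs01 _
            · exact hs01 _
        _ = _ := by ring
    simp only [A', g, zero_add]
    refine (abs_add_le _ _).trans (add_le_add e1 ?_)
    rw [abs_mul]
    calc _ ≤ 1 * _ := mul_le_mul_of_nonneg_right (hψ1 _) (abs_nonneg _)
      _ ≤ _ := by
        rw [one_mul, mul_comm P]
        exact (abs_add_le _ _).trans (add_le_add e2 e3)
  have hT : ∫ u in lo..hi, |A' u| ≤ (6 * M + 1) * P := by
    have i1 : IntervalIntegrable (fun u => |A' u|) volume lo hi := by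
      apply ContinuousOn.intervalIntegrable; rw [Set.uIcc_of_le hlh]; exact hA'c.abs
    have i2 : Continuous fun u => |ψ' ((c + α * u) / r)| / r := by fun_prop
    have i3 : Continuous fun u => |ψ' ((0 + u) / r)| / r := by fun_prop
    have i4 : Continuous g := by simp only [g]; fun_prop
    have j1 : α * ∫ u in lo..hi, |ψ' ((c + α * u) / r)| / r ≤ M := by
      rcases hα with rfl | rfl
      · simpa using hM0
      · simpa using tv_aux hc r c lo hi hr hlh
    have j2 := tv_aux hc r 0 lo hi hr hlh
    calc _ ≤ ∫ u in lo..hi, g u :=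
          intervalIntegral.integral_mono_on hlh i1 (i4.intervalIntegrable _ _) hA'g
      _ = (hi - lo) * (P * (2 * M / R)) + (P * ((α * ∫ u in lo..hi, |ψ' ((c + α * u) / r)| / r) +
            ∫ u in lo..hi, |ψ' ((0 + u) / r)| / r) + (hi - lo) * α) := by
          simp only [g]
          rw [intervalIntegral.integral_add (by simp)
            (Continuous.intervalIntegrable (by fun_prop) _ _),
            intervalIntegral.integral_add (Continuous.intervalIntegrable (by fun_prop) _ _)
            (by simp), intervalIntegral.integral_const, intervalIntegral.integral_const,
            intervalIntegral.integral_const_mul,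
            intervalIntegral.integral_add (Continuous.intervalIntegrable (by fun_prop) _ _)
            (Continuous.intervalIntegrable (by fun_prop) _ _),
            intervalIntegral.integral_const_mul]
          simp
      _ ≤ (2 * R) * (P * (2 * M / R)) + (P * (M + M) + (2 * R) * α) := by
          gcongr <;> linarith
      _ ≤ _ := by
          have : (2 * R) * (P * (2 * M / R)) = 4 * M * P := by field_simp; ring
          rw [this]; nlinarith
  let X : ℝ → ℝ := fun u => γ * c + γ * α * u
  let a : ℝ → ℝ := fun u => √((γ * c + γ * α * u) ^ 2 + (1 + γ * u) ^ 2)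
  let b : ℝ → ℝ := fun u => √((γ * c + γ * α * u) ^ 2 + (-1 + γ * u) ^ 2)
  let a1 : ℝ → ℝ := fun u => (γ * α * (γ * c + γ * α * u) + γ * (1 + γ * u)) / a u
  let b1 : ℝ → ℝ := fun u => (γ * α * (γ * c + γ * α * u) + γ * (-1 + γ * u)) / b u
  let a2 : ℝ → ℝ := fun u => (γ * α * (1 + γ * u) - γ * (γ * c + γ * α * u)) ^ 2 / a u ^ 3
  let b2 : ℝ → ℝ := fun u => (γ * α * (-1 + γ * u) - γ * (γ * c + γ * α * u)) ^ 2 / b u ^ 3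
  have hXpos : ∀ u ∈ Set.Icc lo hi, 0 < γ * c + γ * α * u := fun u hu => by
    have := mul_pos hγ (hρ0 u hu); linarith
  have hapos : ∀ u ∈ Set.Icc lo hi, 0 < a u := fun u hu => by
    have := hXpos u hu; simp only [a]; positivity
  have hbpos : ∀ u ∈ Set.Icc lo hi, 0 < b u := fun u hu => by
    have := hXpos u hu; simp only [b]; positivity
  let h : ℝ → ℝ := fun u => τ / 2 * (ε2 * a u + b u) + σ * (p * (c + α * u) + q * u)
  let h1 : ℝ → ℝ := fun u => τ / 2 * (ε2 * a1 u + b1 u) + σ * (p * α + q * 1)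
  let h2 : ℝ → ℝ := fun u => τ / 2 * (ε2 * a2 u + b2 u)
  have hh : ∀ u ∈ Set.Icc lo hi, HasDerivAt h (h1 u) u := by
    intro u hu
    have ha := nrm_deriv (γ * c) (γ * α) 1 γ u (hXpos u hu)
    have hb := nrm_deriv (γ * c) (γ * α) (-1) γ u (hXpos u hu)
    exact (((ha.const_mul ε2).add hb).const_mul (τ / 2)).add
      ((((hxd u).const_mul p).add ((hasDerivAt_id u).const_mul q)).const_mul σ)
  have hh1 : ∀ u ∈ Set.Icc lo hi, HasDerivAt h1 (h2 u) u := by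
    intro u hu
    have ha := nrm_deriv2 (γ * c) (γ * α) 1 γ u (hXpos u hu)
    have hb := nrm_deriv2 (γ * c) (γ * α) (-1) γ u (hXpos u hu)
    exact (((ha.const_mul ε2).add hb).const_mul (τ / 2)).add_const _
  have hac : Continuous a := by simp only [a]; fun_prop
  have hbc : Continuous b := by simp only [b]; fun_prop
  have ha2c : ContinuousOn a2 (Set.Icc lo hi) :=
    ContinuousOn.div (by fun_prop) (by fun_prop) (fun u hu => pow_ne_zero 3 (hapos u hu).ne')
  have hb2c : ContinuousOn b2 (Set.Icc lo hi) :=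
    ContinuousOn.div (by fun_prop) (by fun_prop) (fun u hu => pow_ne_zero 3 (hbpos u hu).ne')
  have hh2c : ContinuousOn h2 (Set.Icc lo hi) := by simp only [h2]; fun_prop
  have haa : ∀ u, aa γ (c + α * u) u = a u := fun u => by
    simp only [aa, a]; congr 1; ring
  have hbb : ∀ u, bb γ (c + α * u) u = b u := fun u => by
    simp only [bb, b]; congr 1; ring
  have hlow' : ∀ u ∈ Set.Icc lo hi, δ ≤ h2 u := by
    intro u hu
    refine (hlow u hu).trans ?_
    rw [haa, hbb]
    have e1 : γ ^ 2 * (α * (γ * u - 1) - γ * (c + α * u)) ^ 2 / b u ^ 3 = b2 u := by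
      simp only [b2]; congr 1; ring
    have e2 : γ ^ 2 * (α * (γ * u + 1) - γ * (c + α * u)) ^ 2 / a u ^ 3 = a2 u := by
      simp only [a2]; congr 1; ring
    rw [e1, e2]
    have : 0 ≤ a2 u := div_nonneg (sq_nonneg _) (pow_pos (hapos u hu) 3).le
    simp only [h2]
    gcongr
    rcases hε with rfl | rfl <;> linarith
  have key := vdc σ hσ lo hi δ P ((6 * M + 1) * P) A A' h h1 h2 hlh hδ hA hh hh1 hA'c hh2c hlow' hS hT
  have hfin : 8 * P + (6 * M + 1) * P = (6 * M + 9) * P := by ring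
  rw [hfin] at key
  refine le_trans (le_of_eq ?_) key
  congr 1
  apply intervalIntegral.integral_congr
  intro u _
  have e3 : σ * (τ * phs γ ε2 (c + α * u) u) + p * (c + α * u) + q * u = σ * h u := by
    have hσ2 : σ * σ = 1 := by rcases hσ with rfl | rfl <;> norm_num
    have e4 : phs γ ε2 (c + α * u) u = (ε2 * a u + b u) / 2 := by
      rw [← haa, ← hbb]; rfl
    rw [e4]
    simp only [h]
    linear_combination (-(p * (c + α * u) + q * u)) * hσ2
  simp only [A]
  rw [e3]


lemma aa_sq (γ ρ z : ℝ) : aa γ ρ z ^ 2 = (γ * ρ) ^ 2 + (γ * z + 1) ^ 2 :=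
  Real.sq_sqrt (by positivity)

lemma bb_sq (γ ρ z : ℝ) : bb γ ρ z ^ 2 = (γ * ρ) ^ 2 + (γ * z - 1) ^ 2 :=
  Real.sq_sqrt (by positivity)

lemma aa_le (γ ρ z : ℝ) (hγ : 0 < γ) (hρ : 0 < ρ) (hz : 0 < z) :
    aa γ ρ z ≤ γ * ρ + γ * z + 1 := by
  have := mul_pos hγ hρ
  have := mul_pos hγ hz
  apply Real.sqrt_le_iff.2
  constructor
  · positivity
  · nlinarith [mul_pos (mul_pos hγ hρ) (mul_pos hγ hz)]

lemma bb_le_aa (γ ρ z : ℝ) (hγ : 0 < γ) (hz : 0 < z) : bb γ ρ z ≤ aa γ ρ z := by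
  apply Real.sqrt_le_sqrt
  nlinarith [mul_pos hγ hz]

lemma aa_pos (γ ρ z : ℝ) (hγ : 0 < γ) (hρ : 0 < ρ) : 0 < aa γ ρ z := by
  have := mul_pos hγ hρ
  unfold aa; positivity

lemma bb_pos (γ ρ z : ℝ) (hγ : 0 < γ) (hρ : 0 < ρ) : 0 < bb γ ρ z := by
  have := mul_pos hγ hρ
  unfold bb; positivity

lemma low1 (γ ρ z r R τ : ℝ) (hγ : 0 < γ) (hr : 0 < r) (hr1 : r ≤ 1) (hR : 1 ≤ R) (hτ : 0 < τ)
    (hz : r ≤ z) (hzρ : z ≤ ρ / 2) (hρ : ρ ≤ 4 * R) :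
    τ * (γ ^ 3 / (6 * γ + 1) ^ 3) * (r / R) ^ 2 ≤ τ / 2 *
      (γ ^ 2 * (1 * (γ * z - 1) - γ * ρ) ^ 2 / bb γ ρ z ^ 3
       - γ ^ 2 * (1 * (γ * z + 1) - γ * ρ) ^ 2 / aa γ ρ z ^ 3) := by
  have hz0 : 0 < z := by linarith
  have hρ0 : 0 < ρ := by linarith
  have ha := aa_pos γ ρ z hγ hρ0
  have hb := bb_pos γ ρ z hγ hρ0
  have hba := bb_le_aa γ ρ z hγ hz0
  have hal := aa_le γ ρ z hγ hρ0 hz0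
  set a := aa γ ρ z
  set b := bb γ ρ z
  set B := 6 * γ + 1 with hB
  have hB0 : 0 < B := by positivity
  have h1 : γ ^ 2 * (1 * (γ * z - 1) - γ * ρ) ^ 2 / a ^ 3
      ≤ γ ^ 2 * (1 * (γ * z - 1) - γ * ρ) ^ 2 / b ^ 3 := by gcongr
  have h2 : 2 * γ ^ 3 * ρ / a ^ 3 ≤ γ ^ 2 * (1 * (γ * z - 1) - γ * ρ) ^ 2 / a ^ 3
      - γ ^ 2 * (1 * (γ * z + 1) - γ * ρ) ^ 2 / a ^ 3 := by
    rw [← sub_div]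
    apply div_le_div_of_nonneg_right _ (by positivity)
    have : γ ^ 2 * (1 * (γ * z - 1) - γ * ρ) ^ 2 - γ ^ 2 * (1 * (γ * z + 1) - γ * ρ) ^ 2
      = 4 * γ ^ 3 * (ρ - z) := by ring
    rw [this]
    have : 0 < γ ^ 3 := by positivity
    nlinarith
  have h3 : r * a ≤ B * ρ := by
    have : r * a ≤ r * (γ * ρ + γ * (ρ / 2) + 1) := by
      have : γ * z ≤ γ * (ρ / 2) := by gcongr
      gcongr; linarith
    have : r * (γ * ρ) ≤ 1 * (γ * ρ) := by gcongr
    nlinarith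
  have h4 : a ≤ B * R := by
    have : γ * z ≤ γ * (2 * R) := by gcongr; linarith
    have : γ * ρ ≤ γ * (4 * R) := by gcongr
    rw [hB]; nlinarith
  have h5 : r / B ≤ ρ / a := by rw [div_le_div_iff₀ hB0 ha]; linarith
  have h6 : 1 / (B * R) ≤ 1 / a := one_div_le_one_div_of_le ha h4
  have h7 : γ ^ 3 / B ^ 3 * (r / R) ^ 2 ≤ γ ^ 3 * ρ / a ^ 3 := by
    have hR0 : 0 < R := by linarith
    calc γ ^ 3 / B ^ 3 * (r / R) ^ 2 = γ ^ 3 * (r * (r / B) * (1 / (B * R)) ^ 2) := by field_simp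
      _ ≤ γ ^ 3 * (1 * (ρ / a) * (1 / a) ^ 2) := by gcongr
      _ = _ := by field_simp
  calc _ = τ * (γ ^ 3 / B ^ 3 * (r / R) ^ 2) := by ring
    _ ≤ τ * (γ ^ 3 * ρ / a ^ 3) := by gcongr
    _ = τ / 2 * (2 * γ ^ 3 * ρ / a ^ 3) := by ring
    _ ≤ _ := by gcongr; linarith

lemma low2 (γ ρ z r R τ : ℝ) (hγ : 0 < γ) (hr : 0 < r) (hr1 : r ≤ 1) (hR : 1 ≤ R) (hτ : 0 < τ)
    (hz : r ≤ z) (hzρ : ρ / 2 ≤ z) (hρ0 : 0 < ρ) (hρ : ρ ≤ 2 * R) (hzR : z ≤ 2 * R) :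
    τ * (γ ^ 5 / (6 * γ + 1) ^ 5) * (ρ * r / R ^ 2) ^ 2 ≤ τ / 2 *
      (γ ^ 2 * (0 * (γ * z - 1) - γ * ρ) ^ 2 / bb γ ρ z ^ 3
       - γ ^ 2 * (0 * (γ * z + 1) - γ * ρ) ^ 2 / aa γ ρ z ^ 3) := by
  have hz0 : 0 < z := by linarith
  have ha := aa_pos γ ρ z hγ hρ0
  have hb := bb_pos γ ρ z hγ hρ0
  have hba := bb_le_aa γ ρ z hγ hz0
  have hal := aa_le γ ρ z hγ hρ0 hz0
  have has := aa_sq γ ρ z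
  have hbs := bb_sq γ ρ z
  set a := aa γ ρ z
  set b := bb γ ρ z
  set B := 6 * γ + 1 with hB
  have hB0 : 0 < B := by positivity
  have hR0 : 0 < R := by linarith
  have h1 : 2 * (γ * z) ≤ (a - b) * a := by nlinarith
  have h2 : 2 * (γ * z) * a ≤ a ^ 3 - b ^ 3 := by
    have e1 : 0 ≤ a - b := by linarith
    have e2 := mul_le_mul_of_nonneg_right h1 ha.le
    have e3 : 0 ≤ (a - b) * (a * b + b ^ 2) := by positivity
    nlinarith
  have h3 : 2 * (γ * z) / a ^ 5 ≤ 1 / b ^ 3 - 1 / a ^ 3 := by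
    have e1 : 1 / b ^ 3 - 1 / a ^ 3 = (a ^ 3 - b ^ 3) / (a ^ 3 * b ^ 3) := by field_simp
    rw [e1]
    calc 2 * (γ * z) / a ^ 5 = (2 * (γ * z) * a) / (a ^ 3 * a ^ 3) := by field_simp
      _ ≤ (a ^ 3 - b ^ 3) / (a ^ 3 * a ^ 3) := by gcongr
      _ ≤ _ := by
        have : 0 ≤ a ^ 3 - b ^ 3 := le_trans (by positivity) h2
        gcongr
  have h4 : r * a ≤ B * z := by
    have : r * a ≤ r * (γ * (2 * z) + γ * z + 1) := by
      have : γ * ρ ≤ γ * (2 * z) := by gcongr; linarith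
      gcongr
      linarith
    have : r * (γ * z) ≤ 1 * (γ * z) := by gcongr
    nlinarith
  have h5 : a ≤ B * R := by
    have : γ * z ≤ γ * (2 * R) := by gcongr
    have : γ * ρ ≤ γ * (2 * R) := by gcongr
    have : 0 < γ * R := by positivity
    rw [hB]; nlinarith
  have h6 : r / B ≤ z / a := by rw [div_le_div_iff₀ hB0 ha]; linarith
  have h7 : 1 / (B * R) ≤ 1 / a := one_div_le_one_div_of_le ha h5
  have h8 : γ ^ 5 / B ^ 5 * (ρ * r / R ^ 2) ^ 2 ≤ γ ^ 5 * ρ ^ 2 * z / a ^ 5 := by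
    calc γ ^ 5 / B ^ 5 * (ρ * r / R ^ 2) ^ 2
        = γ ^ 5 * ρ ^ 2 * (r * (r / B) * (1 / (B * R)) ^ 4) := by field_simp
      _ ≤ γ ^ 5 * ρ ^ 2 * (1 * (z / a) * (1 / a) ^ 4) := by gcongr
      _ = _ := by field_simp
  calc _ = τ * (γ ^ 5 / B ^ 5 * (ρ * r / R ^ 2) ^ 2) := by ring
    _ ≤ τ * (γ ^ 5 * ρ ^ 2 * z / a ^ 5) := by gcongr
    _ = τ / 2 * (γ ^ 4 * ρ ^ 2 * (2 * (γ * z) / a ^ 5)) := by ring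
    _ ≤ τ / 2 * (γ ^ 4 * ρ ^ 2 * (1 / b ^ 3 - 1 / a ^ 3)) := by gcongr
    _ = _ := by ring

def KK (γ : ℝ) : ℝ := (1 / √(γ ^ 3 / (6 * γ + 1) ^ 3)) + (1 / √(γ ^ 5 / (6 * γ + 1) ^ 5))

lemma KK_pos (γ : ℝ) (hγ : 0 < γ) : 0 < KK γ := by unfold KK; positivity

/-- the integrand -/
def FF (ψ : ℝ → ℝ) (r R γ τ ε2 σ p q ρ z : ℝ) : ℂ :=
  (amp ψ r R ρ z : ℂ) * Complex.exp (Complex.I *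
      ((σ * (τ * phs γ ε2 ρ z) + p * ρ + q * z : ℝ) : ℂ))

lemma W1 {ψ ψ' : ℝ → ℝ} {M : ℝ} (hc : Cut ψ ψ' M) (γ r R τ ε2 σ p q w : ℝ)
    (hγ : 0 < γ) (hr : 0 < r) (hr1 : r ≤ 1) (hR : 1 ≤ R) (hτ : 0 < τ) (hε : ε2 = 1 ∨ ε2 = -1)
    (hσ : σ = 1 ∨ σ = -1) (hw : r ≤ w) (hw2 : w ≤ 2 * R) :
    ‖∫ u in r..w, FF ψ r R γ τ ε2 σ p q (u + w) u‖
      ≤ (6 * M + 9) * 4 * KK γ * R ^ 2 / r / √τ := by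
  have hR0 : 0 < R := by linarith
  have hM := hc.one_le
  have key := line_bound hc γ r R τ ε2 σ p q 1 w r w (4 * R)
    (τ * (γ ^ 3 / (6 * γ + 1) ^ 3) * (r / R) ^ 2) hγ hr hR hτ hε hσ (Or.inr rfl) le_rfl hw hw2 hw
    (fun u hu => by linarith [hu.2]) (by linarith) (by positivity)
    (fun u hu => low1 γ (w + 1 * u) u r R τ hγ hr hr1 hR hτ hu.1 (by linarith [hu.2])
      (by linarith [hu.2]))
  have e : ∀ u, u + w = w + 1 * u := fun u => by ring
  simp_rw [e]
  refine key.trans ?_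
  rw [Real.sqrt_mul (by positivity), Real.sqrt_mul hτ.le, Real.sqrt_sq (by positivity)]
  have hk : 1 / √(γ ^ 3 / (6 * γ + 1) ^ 3) ≤ KK γ := by
    unfold KK
    have : 0 ≤ 1 / √(γ ^ 5 / (6 * γ + 1) ^ 5) := by positivity
    linarith
  calc _ = (6 * M + 9) * 4 * (1 / √(γ ^ 3 / (6 * γ + 1) ^ 3)) * R ^ 2 / r / √τ := by
        have : 0 < √(γ ^ 3 / (6 * γ + 1) ^ 3) := by positivity
        have : 0 < √τ := by positivity
        generalize √(γ ^ 3 / (6 * γ + 1) ^ 3) = k at *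
        field_simp
    _ ≤ _ := by gcongr

lemma W2 {ψ ψ' : ℝ → ℝ} {M : ℝ} (hc : Cut ψ ψ' M) (γ r R τ ε2 σ p q ρ : ℝ)
    (hγ : 0 < γ) (hr : 0 < r) (hr1 : r ≤ 1) (hR : 1 ≤ R) (hτ : 0 < τ) (hε : ε2 = 1 ∨ ε2 = -1)
    (hσ : σ = 1 ∨ σ = -1) (hρ : r ≤ ρ) (hρ2 : ρ ≤ 2 * R) :
    ‖∫ u in (max (ρ / 2) r)..(2 * R), FF ψ r R γ τ ε2 σ p q ρ u‖
      ≤ (6 * M + 9) * 4 * KK γ * R ^ 2 / r / √τ := by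
  have hR0 : 0 < R := by linarith
  have hM := hc.one_le
  have hρ0 : 0 < ρ := by linarith
  have e : ∀ u : ℝ, ρ + 0 * u = ρ := fun u => by ring
  have key := line_bound hc γ r R τ ε2 σ p q 0 ρ (max (ρ / 2) r) (2 * R) ρ
    (τ * (γ ^ 5 / (6 * γ + 1) ^ 5) * (ρ * r / R ^ 2) ^ 2) hγ hr hR hτ hε hσ (Or.inl rfl)
    (le_max_right _ _) (max_le (by linarith) (by linarith)) le_rfl hρ
    (fun u hu => by simp) (by linarith) (by positivity)
    (fun u hu => by
      rw [e]
      exact low2 γ ρ u r R τ hγ hr hr1 hR hτ ((le_max_right _ _).trans hu.1)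
        ((le_max_left _ _).trans hu.1) hρ0 hρ2 hu.2)
  simp_rw [e] at key
  refine key.trans ?_
  rw [Real.sqrt_mul (by positivity), Real.sqrt_mul hτ.le, Real.sqrt_sq (by positivity)]
  have hk : 1 / √(γ ^ 5 / (6 * γ + 1) ^ 5) ≤ KK γ := by
    unfold KK
    have : 0 ≤ 1 / √(γ ^ 3 / (6 * γ + 1) ^ 3) := by positivity
    linarith
  calc _ = (6 * M + 9) * 1 * (1 / √(γ ^ 5 / (6 * γ + 1) ^ 5)) * R ^ 2 / r / √τ := by
        have : 0 < √(γ ^ 5 / (6 * γ + 1) ^ 5) := by positivity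
        have : 0 < √τ := by positivity
        generalize √(γ ^ 5 / (6 * γ + 1) ^ 5) = k at *
        field_simp
    _ ≤ _ := by gcongr; norm_num


lemma outer_bound (r R Q : ℝ) (g : ℝ → ℂ) (hr : 0 < r) (hR : 1 ≤ R) (hQ : 0 ≤ Q)
    (h0 : ∀ x, x ∉ Set.Icc r (2 * R) → g x = 0) (h1 : ∀ x ∈ Set.Icc r (2 * R), ‖g x‖ ≤ Q) :
    ‖∫ x, g x‖ ≤ Q * (2 * R) := by
  rw [← setIntegral_eq_integral_of_forall_compl_eq_zero (s := Set.Icc r (2 * R)) h0]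
  refine (norm_setIntegral_le_of_norm_le_const (by simp) h1).trans ?_
  gcongr
  rw [Measure.real, Real.volume_Icc]
  rw [ENNReal.toReal_ofReal']
  apply max_le <;> linarith

lemma amp_zero {ψ ψ' : ℝ → ℝ} {M : ℝ} (hc : Cut ψ ψ' M) (r R ρ z : ℝ) (hr : 0 < r) (hR : 1 ≤ R)
    (h : ρ ≤ r ∨ z ≤ r ∨ 2 * R ≤ ρ ∨ 2 * R ≤ z) : amp ψ r R ρ z = 0 := by
  have hR0 : 0 < R := by linarith
  unfold amp
  rcases h with h | h | h | h
  · rw [hc.one (ρ / r) ((div_le_one hr).2 h)]; ring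
  · rw [hc.one (z / r) ((div_le_one hr).2 h)]; ring
  · rw [hc.zero (√(ρ ^ 2 + z ^ 2) / R)]; · ring
    rw [le_div_iff₀ hR0]
    apply h.trans
    apply Real.le_sqrt_of_sq_le; nlinarith
  · rw [hc.zero (√(ρ ^ 2 + z ^ 2) / R)]; · ring
    rw [le_div_iff₀ hR0]
    apply h.trans
    apply Real.le_sqrt_of_sq_le; nlinarith

lemma FF_zero {ψ ψ' : ℝ → ℝ} {M : ℝ} (hc : Cut ψ ψ' M) (r R γ τ ε2 σ p q ρ z : ℝ)
    (hr : 0 < r) (hR : 1 ≤ R)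
    (h : ρ ≤ r ∨ z ≤ r ∨ 2 * R ≤ ρ ∨ 2 * R ≤ z) : FF ψ r R γ τ ε2 σ p q ρ z = 0 := by
  unfold FF
  rw [amp_zero hc r R ρ z hr hR h]; simp

lemma FF_cont {ψ ψ' : ℝ → ℝ} {M : ℝ} (hc : Cut ψ ψ' M) (r R γ τ ε2 σ p q : ℝ) :
    Continuous (fun x : ℝ × ℝ => FF ψ r R γ τ ε2 σ p q x.2 x.1) := by
  have hψc : Continuous ψ := continuous_iff_continuousAt.2 fun x => (hc.der x).continuousAt
  unfold FF amp phs
  fun_prop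

lemma FF_int {ψ ψ' : ℝ → ℝ} {M : ℝ} (hc : Cut ψ ψ' M) (r R γ τ ε2 σ p q : ℝ)
    (hr : 0 < r) (hR : 1 ≤ R) :
    Integrable (fun x : ℝ × ℝ => FF ψ r R γ τ ε2 σ p q x.2 x.1) := by
  apply (FF_cont hc r R γ τ ε2 σ p q).integrable_of_hasCompactSupport
  apply HasCompactSupport.intro (K := Set.Icc r (2 * R) ×ˢ Set.Icc r (2 * R))
    (isCompact_Icc.prod isCompact_Icc)
  intro x hx
  apply FF_zero hc _ _ _ _ _ _ _ _ _ _ hr hR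
  by_contra hcon
  push Not at hcon
  exact hx ⟨⟨hcon.2.1.le, hcon.2.2.2.le⟩, ⟨hcon.1.le, hcon.2.2.1.le⟩⟩

lemma core2D {ψ ψ' : ℝ → ℝ} {M : ℝ} (hc : Cut ψ ψ' M) (γ r R τ ε2 σ p q : ℝ)
    (hγ : 0 < γ) (hr : 0 < r) (hr1 : r ≤ 1) (hR : 1 ≤ R) (hτ : 0 < τ) (hε : ε2 = 1 ∨ ε2 = -1)
    (hσ : σ = 1 ∨ σ = -1) :
    ‖∫ x : ℝ × ℝ, FF ψ r R γ τ ε2 σ p q x.2 x.1‖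
      ≤ ((6 * M + 9) * 4 * KK γ * R ^ 2 / r / √τ) * (2 * R) * 2 := by
  have hR0 : 0 < R := by linarith
  have hM := hc.one_le
  have hK := KK_pos γ hγ
  set Q := (6 * M + 9) * 4 * KK γ * R ^ 2 / r / √τ with hQ
  have hQ0 : 0 ≤ Q := by positivity
  set f : ℝ × ℝ → ℂ := fun x => FF ψ r R γ τ ε2 σ p q x.2 x.1 with hf
  have hfi : Integrable f := FF_int hc r R γ τ ε2 σ p q hr hR
  let S : Set (ℝ × ℝ) := {x | x.2 / 2 ≤ x.1}
  have hS : MeasurableSet S := measurableSet_le (by fun_prop) (by fun_prop)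
  have hz := fun ρ z => FF_zero hc r R γ τ ε2 σ p q ρ z hr hR
  rw [← integral_add_compl hS hfi, mul_two]
  refine (norm_add_le _ _).trans (add_le_add ?_ ?_)
  · rw [← integral_indicator hS]
    have hi : Integrable (S.indicator f) (volume.prod volume) := hfi.indicator hS
    rw [Measure.volume_eq_prod, integral_prod_symm _ hi]
    apply outer_bound r R Q _ hr hR hQ0
    · intro ρ hρ
      rw [← integral_zero ℝ ℂ (μ := volume)]
      congr 1
      ext z
      apply Set.indicator_apply_eq_zero.2
      intro _
      apply hz
      by_contra hcon
      push Not at hcon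
      exact hρ ⟨hcon.1.le, hcon.2.2.1.le⟩
    · intro ρ hρ
      have key := W2 hc γ r R τ ε2 σ p q ρ hγ hr hr1 hR hτ hε hσ hρ.1 hρ.2
      have hle : max (ρ / 2) r ≤ 2 * R :=
        max_le (by linarith [hρ.2]) (by linarith)
      rw [intervalIntegral.integral_of_le hle, ← integral_Icc_eq_integral_Ioc,
        ← integral_indicator measurableSet_Icc] at key
      refine le_trans (le_of_eq ?_) key
      congr 2
      ext z
      by_cases h1 : z ∈ Set.Icc (max (ρ / 2) r) (2 * R)
      · rw [Set.indicator_of_mem h1, Set.indicator_of_mem]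
        exact (le_max_left _ _).trans h1.1
      · rw [Set.indicator_of_notMem h1]
        apply Set.indicator_apply_eq_zero.2
        intro h2
        apply hz
        by_contra hcon
        push Not at hcon
        exact h1 ⟨max_le h2 hcon.2.1.le, hcon.2.2.2.le⟩
  · rw [← integral_indicator hS.compl]
    have hi : Integrable (Sᶜ.indicator f) (volume.prod volume) := hfi.indicator hS.compl
    have hmp := measurePreserving_prod_add (volume : Measure ℝ) (volume : Measure ℝ)
    have hemb : MeasurableEmbedding (fun z : ℝ × ℝ => (z.1, z.1 + z.2)) :=
      (MeasurableEquiv.shearAddRight ℝ).measurableEmbedding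
    have hi2 : Integrable (fun x : ℝ × ℝ => Sᶜ.indicator f (x.1, x.1 + x.2)) (volume.prod volume) :=
      (hmp.integrable_comp_emb hemb).2 hi
    rw [Measure.volume_eq_prod, ← hmp.integral_comp hemb]
    rw [integral_prod_symm _ hi2]
    apply outer_bound r R Q _ hr hR hQ0
    · intro w hw
      rw [← integral_zero ℝ ℂ (μ := volume)]
      congr 1
      ext u
      apply Set.indicator_apply_eq_zero.2
      intro h2
      have h3 : u < (u + w) / 2 := not_le.1 h2
      apply hz
      by_contra hcon
      simp only at hcon
      push Not at hcon
      exact hw ⟨by linarith [hcon.2.1], by linarith [hcon.2.2.1, hcon.2.1]⟩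
    · intro w hw
      have key := W1 hc γ r R τ ε2 σ p q w hγ hr hr1 hR hτ hε hσ hw.1 hw.2
      rw [intervalIntegral.integral_of_le hw.1, ← integral_Ico_eq_integral_Ioc,
        ← integral_indicator measurableSet_Ico] at key
      refine le_trans (le_of_eq ?_) key
      congr 2
      ext u
      by_cases h1 : u ∈ Set.Ico r w
      · rw [Set.indicator_of_mem h1, Set.indicator_of_mem]
        show ¬ ((u + w) / 2 ≤ u)
        have := h1.2
        intro; linarith
      · rw [Set.indicator_of_notMem h1]
        apply Set.indicator_apply_eq_zero.2
        intro h2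
        have h3 : u < (u + w) / 2 := not_le.1 h2
        apply hz
        by_contra hcon
        simp only at hcon
        push Not at hcon
        exact h1 ⟨hcon.2.1.le, by linarith⟩


def HH (ψ : ℝ → ℝ) (r R γ τ ε1 ε2 v0 v1 v2 : ℝ) (z x y : ℝ) : ℂ :=
  ((ψ (√(x ^ 2 + y ^ 2 + z ^ 2) / R) *
    ((1 - ψ (√(x ^ 2 + y ^ 2) / r)) * (1 - ψ (|z| / r))) : ℝ) : ℂ) *
  Complex.exp (Complex.I * ((τ * (ε1 / 2 *
    (√(1 + γ ^ 2 * (x ^ 2 + y ^ 2 + z ^ 2) + 2 * γ * z)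
      + ε2 * √(1 + γ ^ 2 * (x ^ 2 + y ^ 2 + z ^ 2) - 2 * γ * z)))
    + (v0 * x + v1 * y + v2 * z) : ℝ) : ℂ))

def LL (ψ : ℝ → ℝ) (r R γ τ ε1 ε2 v0 v1 v2 : ℝ) (θ ρ z : ℝ) : ℂ :=
  FF ψ r R γ τ ε2 (ε1 * ε2) (v0 * Real.cos θ + v1 * Real.sin θ) v2 ρ z +
  FF ψ r R γ τ ε2 ε1 (v0 * Real.cos θ + v1 * Real.sin θ) (-v2) ρ (-z)

lemma polar_eq {ψ ψ' : ℝ → ℝ} {M : ℝ} (hc : Cut ψ ψ' M) (γ r R τ ε1 ε2 v0 v1 v2 : ℝ)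
    (hr : 0 < r) (hε : ε2 = 1 ∨ ε2 = -1) (θ ρ z : ℝ) (hρ : 0 < ρ) :
    (ρ : ℂ) * HH ψ r R γ τ ε1 ε2 v0 v1 v2 z (ρ * Real.cos θ) (ρ * Real.sin θ)
      = LL ψ r R γ τ ε1 ε2 v0 v1 v2 θ ρ z := by
  have hε2 : ε2 * ε2 = 1 := by rcases hε with rfl | rfl <;> norm_num
  have e1 : (ρ * Real.cos θ) ^ 2 + (ρ * Real.sin θ) ^ 2 = ρ ^ 2 := by
    linear_combination ρ ^ 2 * Real.sin_sq_add_cos_sq θ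
  have ea : 1 + γ ^ 2 * (ρ ^ 2 + z ^ 2) + 2 * γ * z = (γ * ρ) ^ 2 + (γ * z + 1) ^ 2 := by ring
  have eb : 1 + γ ^ 2 * (ρ ^ 2 + z ^ 2) - 2 * γ * z = (γ * ρ) ^ 2 + (γ * z - 1) ^ 2 := by ring
  have ea' : (γ * ρ) ^ 2 + (γ * -z - 1) ^ 2 = (γ * ρ) ^ 2 + (γ * z + 1) ^ 2 := by ring
  have eb' : (γ * ρ) ^ 2 + (γ * -z + 1) ^ 2 = (γ * ρ) ^ 2 + (γ * z - 1) ^ 2 := by ring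
  unfold HH LL FF
  rw [e1, Real.sqrt_sq hρ.le, ea, eb]
  set a := √((γ * ρ) ^ 2 + (γ * z + 1) ^ 2) with ha
  set b := √((γ * ρ) ^ 2 + (γ * z - 1) ^ 2) with hb
  have p1 : ε1 * ε2 * (τ * phs γ ε2 ρ z) + (v0 * Real.cos θ + v1 * Real.sin θ) * ρ + v2 * z
      = τ * (ε1 / 2 * (a + ε2 * b)) + (v0 * (ρ * Real.cos θ) + v1 * (ρ * Real.sin θ) + v2 * z) := by
    unfold phs
    rw [← ha, ← hb]
    linear_combination (τ * ε1 / 2 * a) * hε2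
  have p2 : ε1 * (τ * phs γ ε2 ρ (-z)) + (v0 * Real.cos θ + v1 * Real.sin θ) * ρ + (-v2) * (-z)
      = τ * (ε1 / 2 * (a + ε2 * b)) + (v0 * (ρ * Real.cos θ) + v1 * (ρ * Real.sin θ) + v2 * z) := by
    unfold phs
    rw [ea', eb', ← ha, ← hb]
    ring
  rw [p1, p2, ← add_mul, ← mul_assoc]
  congr 1
  norm_cast
  unfold amp
  have hz : (1 - ψ (|z| / r)) = (1 - ψ (z / r)) + (1 - ψ (-z / r)) := by
    rcases le_total 0 z with h | h
    · rw [abs_of_nonneg h, hc.one (-z / r)]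
      · ring
      · rw [div_le_one hr]; linarith
    · rw [abs_of_nonpos h, hc.one (z / r)]
      · ring
      · rw [div_le_one hr]; linarith
  rw [hz, neg_sq]
  ring

lemma HH_cont {ψ ψ' : ℝ → ℝ} {M : ℝ} (hc : Cut ψ ψ' M) (γ r R τ ε1 ε2 v0 v1 v2 : ℝ) :
    Continuous (fun x : ℝ × (ℝ × ℝ) => HH ψ r R γ τ ε1 ε2 v0 v1 v2 x.1 x.2.1 x.2.2) := by
  have hψc : Continuous ψ := continuous_iff_continuousAt.2 fun x => (hc.der x).continuousAt
  unfold HH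
  fun_prop

lemma HH_int {ψ ψ' : ℝ → ℝ} {M : ℝ} (hc : Cut ψ ψ' M) (γ r R τ ε1 ε2 v0 v1 v2 : ℝ) (hR : 1 ≤ R) :
    Integrable (fun x : ℝ × (ℝ × ℝ) => HH ψ r R γ τ ε1 ε2 v0 v1 v2 x.1 x.2.1 x.2.2) := by
  apply (HH_cont hc γ r R τ ε1 ε2 v0 v1 v2).integrable_of_hasCompactSupport
  apply HasCompactSupport.intro (K := Set.Icc (-(2 * R)) (2 * R) ×ˢ
    (Set.Icc (-(2 * R)) (2 * R) ×ˢ Set.Icc (-(2 * R)) (2 * R)))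
    (isCompact_Icc.prod (isCompact_Icc.prod isCompact_Icc))
  rintro ⟨z, x, y⟩ hx
  have hR0 : 0 < R := by linarith
  by_contra hcon
  apply hx
  have h1 : √(x ^ 2 + y ^ 2 + z ^ 2) / R < 2 := by
    by_contra h2
    apply hcon
    unfold HH
    simp only
    rw [hc.zero _ (not_lt.1 h2)]
    simp
  rw [div_lt_iff₀ hR0] at h1
  rw [Real.sqrt_lt' (by positivity)] at h1
  refine ⟨⟨?_, ?_⟩, ⟨?_, ?_⟩, ⟨?_, ?_⟩⟩ <;> simp only <;> nlinarith

lemma LL_cont {ψ ψ' : ℝ → ℝ} {M : ℝ} (hc : Cut ψ ψ' M) (γ r R τ ε1 ε2 v0 v1 v2 : ℝ) :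
    Continuous (fun x : (ℝ × ℝ) × ℝ => LL ψ r R γ τ ε1 ε2 v0 v1 v2 x.1.2 x.1.1 x.2) := by
  have hψc : Continuous ψ := continuous_iff_continuousAt.2 fun x => (hc.der x).continuousAt
  unfold LL FF amp phs
  fun_prop

lemma LL_zero {ψ ψ' : ℝ → ℝ} {M : ℝ} (hc : Cut ψ ψ' M) (γ r R τ ε1 ε2 v0 v1 v2 θ ρ z : ℝ)
    (hr : 0 < r) (hR : 1 ≤ R) (h : ρ ≤ r ∨ 2 * R ≤ ρ ∨ 2 * R ≤ |z|) :
    LL ψ r R γ τ ε1 ε2 v0 v1 v2 θ ρ z = 0 := by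
  unfold LL
  have hR0 : 0 < R := by linarith
  rcases h with h | h | h
  · rw [FF_zero hc _ _ _ _ _ _ _ _ _ _ hr hR (Or.inl h),
      FF_zero hc _ _ _ _ _ _ _ _ _ _ hr hR (Or.inl h), add_zero]
  · rw [FF_zero hc _ _ _ _ _ _ _ _ _ _ hr hR (Or.inr (Or.inr (Or.inl h))),
      FF_zero hc _ _ _ _ _ _ _ _ _ _ hr hR (Or.inr (Or.inr (Or.inl h))), add_zero]
  · rcases le_abs'.1 h with h | h
    · rw [FF_zero hc _ _ _ _ _ _ _ _ _ _ hr hR (Or.inr (Or.inl (by linarith))),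
      FF_zero hc _ _ _ _ _ _ _ _ _ _ hr hR (Or.inr (Or.inr (Or.inr (by linarith)))), add_zero]
    · rw [FF_zero hc _ _ _ _ _ _ _ _ _ _ hr hR (Or.inr (Or.inr (Or.inr (by linarith)))),
      FF_zero hc _ _ _ _ _ _ _ _ _ _ hr hR (Or.inr (Or.inl (by linarith))), add_zero]

lemma negmp : MeasurePreserving (fun x : ℝ × ℝ => (-x.1, x.2)) volume volume :=
  (Measure.measurePreserving_neg (volume : Measure ℝ)).prod (MeasurePreserving.id _)

lemma negemb : MeasurableEmbedding (fun x : ℝ × ℝ => (-x.1, x.2)) :=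
  ((MeasurableEquiv.neg ℝ).prodCongr (MeasurableEquiv.refl ℝ)).measurableEmbedding

lemma LL_int {ψ ψ' : ℝ → ℝ} {M : ℝ} (hc : Cut ψ ψ' M) (γ r R τ ε1 ε2 v0 v1 v2 θ : ℝ)
    (hr : 0 < r) (hR : 1 ≤ R) :
    Integrable (fun x : ℝ × ℝ => LL ψ r R γ τ ε1 ε2 v0 v1 v2 θ x.2 x.1) :=
  (FF_int hc _ _ _ _ _ _ _ _ hr hR).add
    ((negmp.integrable_comp_emb negemb).2 (FF_int hc r R γ τ ε2 ε1
      (v0 * Real.cos θ + v1 * Real.sin θ) (-v2) hr hR))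

def BD (M γ r R τ : ℝ) : ℝ := ((6 * M + 9) * 4 * KK γ * R ^ 2 / r / √τ) * (2 * R) * 2 * 2

lemma LL_bound {ψ ψ' : ℝ → ℝ} {M : ℝ} (hc : Cut ψ ψ' M) (γ r R τ ε1 ε2 v0 v1 v2 θ : ℝ)
    (hγ : 0 < γ) (hr : 0 < r) (hr1 : r ≤ 1) (hR : 1 ≤ R) (hτ : 0 < τ) (hε : ε2 = 1 ∨ ε2 = -1)
    (hε1 : ε1 = 1 ∨ ε1 = -1) :
    ‖∫ x : ℝ × ℝ, LL ψ r R γ τ ε1 ε2 v0 v1 v2 θ x.2 x.1‖ ≤ BD M γ r R τ := by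
  have hσ : ε1 * ε2 = 1 ∨ ε1 * ε2 = -1 := by
    rcases hε with rfl | rfl <;> rcases hε1 with rfl | rfl <;> norm_num
  unfold LL BD
  have h2 : Integrable (fun x : ℝ × ℝ => FF ψ r R γ τ ε2 ε1
      (v0 * Real.cos θ + v1 * Real.sin θ) (-v2) x.2 (-x.1)) :=
    (negmp.integrable_comp_emb negemb).2 (FF_int hc r R γ τ ε2 ε1
      (v0 * Real.cos θ + v1 * Real.sin θ) (-v2) hr hR)
  have h1 : Integrable (fun x : ℝ × ℝ => FF ψ r R γ τ ε2 (ε1 * ε2)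
      (v0 * Real.cos θ + v1 * Real.sin θ) v2 x.2 x.1) := FF_int hc _ _ _ _ _ _ _ _ hr hR
  rw [integral_add h1 h2, mul_two (_ * 2)]
  refine (norm_add_le _ _).trans (add_le_add
    (core2D hc γ r R τ ε2 _ _ _ hγ hr hr1 hR hτ hε hσ) ?_)
  have := negmp.integral_comp negemb (fun x : ℝ × ℝ => FF ψ r R γ τ ε2 ε1
      (v0 * Real.cos θ + v1 * Real.sin θ) (-v2) x.2 x.1)
  simp only at this
  rw [this]
  exact core2D hc γ r R τ ε2 _ _ _ hγ hr hr1 hR hτ hε hε1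

lemma HH_bound {ψ ψ' : ℝ → ℝ} {M : ℝ} (hc : Cut ψ ψ' M) (γ r R τ ε1 ε2 v0 v1 v2 : ℝ)
    (hγ : 0 < γ) (hr : 0 < r) (hr1 : r ≤ 1) (hR : 1 ≤ R) (hτ : 0 < τ) (hε : ε2 = 1 ∨ ε2 = -1)
    (hε1 : ε1 = 1 ∨ ε1 = -1) :
    ‖∫ x : ℝ × (ℝ × ℝ), HH ψ r R γ τ ε1 ε2 v0 v1 v2 x.1 x.2.1 x.2.2‖
      ≤ BD M γ r R τ * (2 * π) := by
  set L : ℝ → ℝ → ℝ → ℂ := LL ψ r R γ τ ε1 ε2 v0 v1 v2 with hL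
  have hz := fun θ ρ z => LL_zero hc γ r R τ ε1 ε2 v0 v1 v2 θ ρ z hr hR
  have hi : Integrable (fun x : ℝ × (ℝ × ℝ) => HH ψ r R γ τ ε1 ε2 v0 v1 v2 x.1 x.2.1 x.2.2)
    ((volume : Measure ℝ).prod (volume : Measure (ℝ × ℝ))) := HH_int hc γ r R τ ε1 ε2 v0 v1 v2 hR
  have hT : polarCoord.target = Set.Ioi (0:ℝ) ×ˢ Set.Ioo (-π) π := rfl
  have hTm : MeasurableSet (Set.Ioi (0:ℝ) ×ˢ Set.Ioo (-π) π) :=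
    measurableSet_Ioi.prod measurableSet_Ioo
  have step1 : ∫ x : ℝ × (ℝ × ℝ), HH ψ r R γ τ ε1 ε2 v0 v1 v2 x.1 x.2.1 x.2.2
      = ∫ p in Set.Ioi (0:ℝ) ×ˢ Set.Ioo (-π) π, ∫ z, L p.2 p.1 z := by
    rw [Measure.volume_eq_prod, integral_prod_symm _ hi, ← integral_comp_polarCoord_symm, hT]
    apply setIntegral_congr_fun hTm
    rintro ⟨ρ, θ⟩ hp
    simp only
    rw [Complex.real_smul, ← integral_const_mul]
    congr 1
    ext z
    exact polar_eq hc γ r R τ ε1 ε2 v0 v1 v2 hr hε θ ρ z hp.1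
  have hI1 : Integrable (fun x : (ℝ × ℝ) × ℝ => L x.1.2 x.1.1 x.2)
      (((volume : Measure (ℝ × ℝ)).restrict (Set.Ioi (0:ℝ) ×ˢ Set.Ioo (-π) π)).prod
        (volume : Measure ℝ)) := by
    have : IntegrableOn (fun x : (ℝ × ℝ) × ℝ => L x.1.2 x.1.1 x.2)
        ((Set.Ioi (0:ℝ) ×ˢ Set.Ioo (-π) π) ×ˢ Set.univ)
        ((volume : Measure (ℝ × ℝ)).prod (volume : Measure ℝ)) := by
      have hK : IntegrableOn (fun x : (ℝ × ℝ) × ℝ => L x.1.2 x.1.1 x.2)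
        ((Set.Icc r (2 * R) ×ˢ Set.Icc (-π) π) ×ˢ Set.Icc (-(2 * R)) (2 * R))
        ((volume : Measure (ℝ × ℝ)).prod (volume : Measure ℝ)) :=
        (LL_cont hc γ r R τ ε1 ε2 v0 v1 v2).continuousOn.integrableOn_compact
          ((isCompact_Icc.prod isCompact_Icc).prod isCompact_Icc)
      apply hK.of_forall_sdiff_eq_zero (hTm.prod MeasurableSet.univ)
      rintro ⟨⟨ρ, θ⟩, z⟩ ⟨h1, h2⟩
      apply hz
      by_contra hcon
      push Not at hcon
      have := abs_le.1 hcon.2.2.le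
      exact h2 ⟨⟨⟨hcon.1.le, hcon.2.1.le⟩, ⟨h1.1.2.1.le, h1.1.2.2.le⟩⟩, this⟩
    rw [IntegrableOn, ← Measure.prod_restrict, Measure.restrict_univ] at this
    exact this
  have hI2 : Integrable (fun p : ℝ × ℝ => ∫ z, L p.2 p.1 z)
      (((volume : Measure ℝ).restrict (Set.Ioi (0:ℝ))).prod
        ((volume : Measure ℝ).restrict (Set.Ioo (-π) π))) := by
    rw [Measure.prod_restrict]
    exact hI1.integral_prod_left
  rw [step1, Measure.volume_eq_prod, ← Measure.prod_restrict, integral_prod_symm _ hI2]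
  have hb : ∀ θ ∈ Set.Ioo (-π) π, ‖∫ ρ in Set.Ioi (0:ℝ), ∫ z, L θ ρ z‖ ≤ BD M γ r R τ := by
    intro θ _
    have h1 : ∫ ρ in Set.Ioi (0:ℝ), ∫ z, L θ ρ z = ∫ ρ, ∫ z, L θ ρ z := by
      apply setIntegral_eq_integral_of_forall_compl_eq_zero
      intro ρ hρ
      rw [← integral_zero ℝ ℂ (μ := volume)]
      congr 1
      ext z
      apply hz
      left
      have : ρ ≤ 0 := not_lt.1 hρ
      linarith
    have h2 := LL_int hc γ r R τ ε1 ε2 v0 v1 v2 θ hr hR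
    rw [Measure.volume_eq_prod] at h2
    rw [h1, ← integral_prod_symm (fun x : ℝ × ℝ => L θ x.2 x.1) h2]
    exact LL_bound hc γ r R τ ε1 ε2 v0 v1 v2 θ hγ hr hr1 hR hτ hε hε1
  refine (norm_setIntegral_le_of_norm_le_const (by simp) hb).trans (le_of_eq ?_)
  rw [Measure.real, Real.volume_Ioo, ENNReal.toReal_ofReal (by linarith [Real.pi_pos])]
  ring

def e3eq : E3 ≃ᵐ ℝ × (ℝ × ℝ) :=
  ((MeasurableEquiv.toLp 2 (Fin 3 → ℝ)).symm.trans
    (MeasurableEquiv.piFinSuccAbove (fun _ : Fin 3 => ℝ) 2)).trans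
    ((MeasurableEquiv.refl ℝ).prodCongr MeasurableEquiv.finTwoArrow)

lemma e3eq_apply (ξ : E3) : e3eq ξ = (ξ 2, (ξ 0, ξ 1)) := rfl

lemma e3eq_mp : MeasurePreserving e3eq volume volume :=
  ((MeasurePreserving.id (volume : Measure ℝ)).prod (volume_preserving_finTwoArrow ℝ)).comp
    ((volume_preserving_piFinSuccAbove (fun _ : Fin 3 => ℝ) 2).comp
      (EuclideanSpace.volume_preserving_symm_measurableEquiv_toLp (Fin 3)))

/-- The oscillatory multiplier on the frequency space. -/
def mul3 (ψ : ℝ → ℝ) (r R γ ε1 ε2 τ : ℝ) (ξ : E3) : ℂ :=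
  ((Psi ψ r R ξ : ℝ) : ℂ) * Complex.exp (((τ : ℝ) : ℂ) * lamEV γ ε1 ε2 ξ)

lemma norm3 (ξ : E3) : ‖ξ‖ = √(ξ 0 ^ 2 + ξ 1 ^ 2 + ξ 2 ^ 2) := by
  rw [EuclideanSpace.norm_eq, Fin.sum_univ_three]
  simp

lemma inner3 (ξ η : E3) : inner ℝ ξ η = ξ 0 * η 0 + ξ 1 * η 1 + ξ 2 * η 2 := by
  rw [PiLp.inner_apply, Fin.sum_univ_three]
  simp
  ring

lemma mul3_eq (ψ : ℝ → ℝ) (r R γ ε1 ε2 τ v0 v1 v2 : ℝ) (ξ : E3) :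
    Complex.exp (((v0 * ξ 0 + v1 * ξ 1 + v2 * ξ 2 : ℝ) : ℂ) * I) * mul3 ψ r R γ ε1 ε2 τ ξ
      = HH ψ r R γ τ ε1 ε2 v0 v1 v2 (ξ 2) (ξ 0) (ξ 1) := by
  have hn : ‖ξ‖ ^ 2 = ξ 0 ^ 2 + ξ 1 ^ 2 + ξ 2 ^ 2 := by
    rw [norm3, Real.sq_sqrt (by positivity)]
  unfold mul3 HH Psi xih lamEV
  rw [hn, norm3, mul_left_comm, ← Complex.exp_add]
  congr 2
  push_cast
  ring

lemma HH3_int {ψ ψ' : ℝ → ℝ} {M : ℝ} (hc : Cut ψ ψ' M) (γ r R τ ε1 ε2 v0 v1 v2 : ℝ)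
    (hR : 1 ≤ R) :
    Integrable (fun ξ : E3 => HH ψ r R γ τ ε1 ε2 v0 v1 v2 (ξ 2) (ξ 0) (ξ 1)) :=
  (e3eq_mp.integrable_comp_emb e3eq.measurableEmbedding).2
    (HH_int hc γ r R τ ε1 ε2 v0 v1 v2 hR)

lemma HH3_bound {ψ ψ' : ℝ → ℝ} {M : ℝ} (hc : Cut ψ ψ' M) (γ r R τ ε1 ε2 v0 v1 v2 : ℝ)
    (hγ : 0 < γ) (hr : 0 < r) (hr1 : r ≤ 1) (hR : 1 ≤ R) (hτ : 0 < τ) (hε : ε2 = 1 ∨ ε2 = -1)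
    (hε1 : ε1 = 1 ∨ ε1 = -1) :
    ‖∫ ξ : E3, HH ψ r R γ τ ε1 ε2 v0 v1 v2 (ξ 2) (ξ 0) (ξ 1)‖
      ≤ BD M γ r R τ * (2 * π) := by
  have := e3eq_mp.integral_comp e3eq.measurableEmbedding
    (fun x : ℝ × (ℝ × ℝ) => HH ψ r R γ τ ε1 ε2 v0 v1 v2 x.1 x.2.1 x.2.2)
  simp only [e3eq_apply] at this
  rw [this]
  exact HH_bound hc γ r R τ ε1 ε2 v0 v1 v2 hγ hr hr1 hR hτ hε hε1

lemma PsiG_bound {ψ ψ' : ℝ → ℝ} {M : ℝ} (hc : Cut ψ ψ' M) (γ r R ε t ε1 ε2 : ℝ)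
    (hγ : 0 < γ) (hr : 0 < r) (hr1 : r ≤ 1) (hR : 1 ≤ R) (hτ : 0 < t / ε)
    (hε : ε2 = 1 ∨ ε2 = -1)
    (hε1 : ε1 = 1 ∨ ε1 = -1) (f : E3 → ℂ) (hf : Integrable f) (x : E3) :
    ‖PsiG ψ r R γ ε1 ε2 ε t f x‖ ≤ BD M γ r R (t / ε) * (2 * π) * ∫ y, ‖f y‖ := by
  set τ := t / ε with hτd
  set g : E3 → ℂ := fun ξ => HH ψ r R γ τ ε1 ε2 (2 * π * x 0) (2 * π * x 1) (2 * π * x 2)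
    (ξ 2) (ξ 0) (ξ 1) with hg
  have hgi : Integrable g := HH3_int hc γ r R τ ε1 ε2 _ _ _ hR
  have h1 : PsiG ψ r R γ ε1 ε2 ε t f x = ∫ ξ, (FourierTransform.fourier f ξ) • g ξ := by
    unfold PsiG FTinv
    rw [Real.fourierInv_eq']
    congr 1
    ext ξ
    have := mul3_eq ψ r R γ ε1 ε2 τ (2 * π * x 0) (2 * π * x 1) (2 * π * x 2) ξ
    simp only [hg]
    rw [← this, inner3, smul_eq_mul, smul_eq_mul, mul3, FT]
    have e : 2 * π * (ξ 0 * x 0 + ξ 1 * x 1 + ξ 2 * x 2)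
      = 2 * π * x 0 * ξ 0 + 2 * π * x 1 * ξ 1 + 2 * π * x 2 * ξ 2 := by ring
    rw [e]
    ring
  have h2 : ∫ ξ, (FourierTransform.fourier f ξ) • g ξ
      = ∫ y, f y • FourierTransform.fourier g y := by
    simpa using! (VectorFourier.integral_fourierIntegral_smul_eq_flip (L := innerₗ E3)
      Real.continuous_fourierChar continuous_inner hf hgi)
  have h3 : ∀ y, ‖FourierTransform.fourier g y‖ ≤ BD M γ r R τ * (2 * π) := by
    intro y
    rw [Real.fourier_eq']
    have h4 : ∀ ξ : E3, cexp (↑(-2 * π * inner ℝ ξ y) * I) • g ξ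
      = HH ψ r R γ τ ε1 ε2 (2 * π * (x 0 - y 0)) (2 * π * (x 1 - y 1)) (2 * π * (x 2 - y 2))
        (ξ 2) (ξ 0) (ξ 1) := by
      intro ξ
      simp only [hg]
      rw [← mul3_eq, ← mul3_eq, smul_eq_mul, ← mul_assoc, ← Complex.exp_add, inner3]
      congr 2
      push_cast
      ring
    simp only [h4]
    exact HH3_bound hc γ r R τ ε1 ε2 _ _ _ hγ hr hr1 hR hτ hε hε1
  rw [h1, h2, ← integral_const_mul]
  refine norm_integral_le_of_norm_le (hf.norm.const_mul _) (Eventually.of_forall fun y => ?_)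
  rw [norm_smul, mul_comm]
  exact mul_le_mul_of_nonneg_right (h3 y) (norm_nonneg _)

lemma cut_of {ψ : ℝ → ℝ} (hψ : IsCutoff ψ) : ∃ M, Cut ψ (deriv ψ) M := by
  obtain ⟨hs, hI, h1, h0⟩ := hψ
  have hd : Differentiable ℝ ψ := hs.differentiable (by simp)
  have hcont : Continuous (deriv ψ) := hs.continuous_deriv (by simp)
  have hz : ∀ x, x ∉ Set.Icc (1:ℝ) 2 → deriv ψ x = 0 := by
    intro x hx
    have hx' : x < 1 ∨ 2 < x := by
      by_contra! h
      exact hx h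
    rcases hx' with h | h
    · have : ψ =ᶠ[nhds x] fun _ => 1 := by
        filter_upwards [Iio_mem_nhds h] with y hy using h1 y (le_of_lt hy)
      rw [this.deriv_eq, deriv_const]
    · have : ψ =ᶠ[nhds x] fun _ => 0 := by
        filter_upwards [Ioi_mem_nhds h] with y hy using h0 y (le_of_lt hy)
      rw [this.deriv_eq, deriv_const]
  have hcs : HasCompactSupport (deriv ψ) := HasCompactSupport.intro isCompact_Icc hz
  obtain ⟨B, hB⟩ := hcs.exists_bound_of_continuous hcont
  have hint : Integrable (fun x => |deriv ψ x|) := (hcont.integrable_of_hasCompactSupport hcs).abs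
  have hB0 : 0 ≤ B := (norm_nonneg _).trans (hB 0)
  have hI0 : 0 ≤ ∫ x, |deriv ψ x| := integral_nonneg fun x => abs_nonneg _
  refine ⟨1 + B + ∫ x, |deriv ψ x|, ?_, fun x => (hd x).hasDerivAt, hcont, fun x => (hI x).1,
    fun x => (hI x).2, fun x => ?_, fun a b hab => ?_, h1, h0⟩
  · linarith
  · have := hB x
    rw [Real.norm_eq_abs] at this
    linarith
  · rw [intervalIntegral.integral_of_le hab]
    have := setIntegral_le_integral (s := Set.Ioc a b) hint
      (Eventually.of_forall fun x => abs_nonneg _)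
    linarith


/-- For `0 < r ≤ 1 ≤ R`, `ε > 0`, each phase `λ`, every `t > 0` and
every `f ∈ L¹(ℝ³)`: `‖Ψ_{r,R}(D)G_λ(t)f‖_{L^∞} ≤ C R³ r^{−2} (ε/t)^{1/2} ‖f‖_{L¹}`,
with `C` depending only on `γ̄` and `ψ`. -/
theorem dispersive_Linfty (γ : ℝ) (hγ : 0 < γ) (ψ : ℝ → ℝ) (hψ : IsCutoff ψ) :
    ∃ C : ℝ, 0 < C ∧
      ∀ r R ε : ℝ, 0 < r → r ≤ 1 → 1 ≤ R → 0 < ε →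
      ∀ ε1 ε2 : ℝ, (ε1 = 1 ∨ ε1 = -1) → (ε2 = 1 ∨ ε2 = -1) →
      ∀ t : ℝ, 0 < t →
      ∀ f : E3 → ℂ, Integrable f volume →
        eLpNorm (PsiG ψ r R γ ε1 ε2 ε t f) ⊤ volume ≤
          ENNReal.ofReal (C * R ^ 3 * r ^ (-(2:ℝ)) * (ε / t) ^ ((1:ℝ)/2) *
            (∫ x : E3, ‖f x‖)) := by
  obtain ⟨M, hc⟩ := cut_of hψ
  have hM := hc.one_le
  have hK := KK_pos γ hγ
  refine ⟨(6 * M + 9) * 4 * KK γ * 2 * 2 * 2 * (2 * π), by positivity, ?_⟩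
  intro r R ε hr hr1 hR hε ε1 ε2 hε1 hε2 t ht f hf
  have hτ : 0 < t / ε := div_pos ht hε
  have hR0 : 0 < R := by linarith
  rw [eLpNorm_exponent_top]
  refine eLpNormEssSup_le_of_ae_bound (Eventually.of_forall fun x => ?_)
  refine (PsiG_bound hc γ r R ε t ε1 ε2 hγ hr hr1 hR hτ hε2 hε1 f hf x).trans ?_
  refine mul_le_mul_of_nonneg_right ?_ (integral_nonneg fun _ => norm_nonneg _)
  have e1 : (ε / t) ^ ((1:ℝ)/2) = (√(t / ε))⁻¹ := by
    rw [← Real.sqrt_eq_rpow, ← Real.sqrt_inv, inv_div]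
  have e2 : r⁻¹ ≤ r ^ (-(2:ℝ)) := by
    rw [Real.rpow_neg hr.le, Real.rpow_two]
    exact inv_anti₀ (by positivity) (by nlinarith)
  rw [e1]
  have e3 : BD M γ r R (t / ε) * (2 * π) = (6 * M + 9) * 4 * KK γ * 2 * 2 * 2 * (2 * π) * R ^ 3
      * r⁻¹ * (√(t / ε))⁻¹ := by
    unfold BD
    rw [div_eq_mul_inv, div_eq_mul_inv]
    ring
  rw [e3]
  gcongr
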